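/- If M ∈ ℂ^{n×n} has rank n−1, then Toep(M) ≤ 2⌊n/2⌋ + 4. -/

import Mathlib

def IsToeplitz {n : ℕ} (M : Matrix (Fin n) (Fin n) ℂ) : Prop :=
  ∀ (i j : Fin n) (hi : (i : ℕ) + 1 < n) (hj : (j : ℕ) + 1 < n),
    M i j = M ⟨i + 1, hi⟩ ⟨j + 1, hj⟩

noncomputable def ToepNum {n : ℕ} (M : Matrix (Fin n) (Fin n) ℂ) : ℕ :=
  sInf {s | ∃ L : List (Matrix (Fin n) (Fin n) ℂ),
    L.length = s ∧ (∀ T ∈ L, IsToeplitz T) ∧ L.prod = M}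

/-!
Let `M` be an `n × n` matrix of rank at least `n - 1`, so that its kernel is spanned by a single
vector `v`. It suffices to find Toeplitz matrices `T₁`, `T₂` such that `T₁ * T₂` also has kernel
spanned by `v`: matrices with the same kernel differ by an invertible left factor `P`.

If `v ≠ 0`, read `v` as a power series `X ^ k * f` with `f` invertible. The lower triangular
Toeplitz matrix of `f⁻¹` sends `v` to the basis vector `e k`. A power of the cyclic permutation
matrix of size `n + 1` is Toeplitz; choosing it so that its last row reads off position `k` and
deleting its last row and column leaves a Toeplitz matrix with kernel spanned by `e k`.

The number of Toeplitz factors is subadditive because every matrix is a product of Toeplitz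
matrices: changing a corner entry of a cyclic permutation matrix keeps it Toeplitz, and this
produces all elementary matrices.
-/

open Matrix

/-- Toeplitz matrices with entries in an arbitrary type; `IsToeplitz` is the case of complex
entries. -/
def IsToeplitzMatrix {n : ℕ} {R : Type*} (M : Matrix (Fin n) (Fin n) R) : Prop :=
  ∀ (i j : Fin n) (hi : (i : ℕ) + 1 < n) (hj : (j : ℕ) + 1 < n),
    M i j = M ⟨i + 1, hi⟩ ⟨j + 1, hj⟩

/-- The least number of Toeplitz factors in a factorization of `M` over an arbitrary semiring;
`ToepNum` is the complex case. The value is `0` if `M` is not a product of Toeplitz matrices, which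
does not happen over a field. -/
noncomputable def toeplitzNumber {n : ℕ} {R : Type*} [Semiring R]
    (M : Matrix (Fin n) (Fin n) R) : ℕ :=
  sInf {s | ∃ L : List (Matrix (Fin n) (Fin n) R),
    L.length = s ∧ (∀ T ∈ L, IsToeplitzMatrix T) ∧ L.prod = M}

namespace IsToeplitzMatrix

variable {n : ℕ} {R : Type*}

theorem add [Add R] {A B : Matrix (Fin n) (Fin n) R} (hA : IsToeplitzMatrix A)
    (hB : IsToeplitzMatrix B) : IsToeplitzMatrix (A + B) := fun i j hi hj => by
  rw [Matrix.add_apply, Matrix.add_apply, hA i j hi hj, hB i j hi hj]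

theorem one [Zero R] [One R] : IsToeplitzMatrix (1 : Matrix (Fin n) (Fin n) R) :=
  fun i j hi hj => by simp [Matrix.one_apply, Fin.ext_iff]

theorem single_last_zero [Zero R] (c : R) :
    IsToeplitzMatrix (Matrix.single (Fin.last n) 0 c) := fun i j hi hj => by
  simp only [single_apply, Fin.ext_iff, Fin.val_last, Fin.val_zero]
  grind

theorem single_zero_last [Zero R] (c : R) :
    IsToeplitzMatrix (Matrix.single 0 (Fin.last n) c) := fun i j hi hj => by
  simp only [single_apply, Fin.ext_iff, Fin.val_last, Fin.val_zero]
  grind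

theorem permMatrix_addRight [Zero R] [One R] (k : Fin (n + 1)) :
    IsToeplitzMatrix ((Equiv.addRight k).permMatrix R) := fun i j hi hj => by
  have succ_eq (a : Fin (n + 1)) (ha : (a : ℕ) + 1 < n + 1) : ⟨a + 1, ha⟩ = a + 1 :=
    Fin.ext (Fin.val_add_one_of_lt (Fin.lt_def.2 (Nat.succ_lt_succ_iff.1 ha))).symm
  simp [succ_eq, PEquiv.toMatrix_apply, add_right_comm i 1 k]

theorem submatrix_castSucc {M : Matrix (Fin (n + 1)) (Fin (n + 1)) R} (hM : IsToeplitzMatrix M) :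
    IsToeplitzMatrix (M.submatrix Fin.castSucc Fin.castSucc) := fun i j _ _ =>
  hM i.castSucc j.castSucc _ _

end IsToeplitzMatrix

section ElementaryMatrices

variable {ι κ R : Type*} [DecidableEq ι] [DecidableEq κ] [CommRing R]

theorem transvection_submatrix_equiv (e : κ ≃ ι) (i j : ι) (c : R) :
    (transvection i j c).submatrix e e = transvection (e.symm i) (e.symm j) c := by
  simp [transvection, submatrix_add]

theorem transvection_commutator [Fintype ι] {i j l : ι} (hij : i ≠ j) (hjl : j ≠ l) (hil : i ≠ l)
    (c : R) :
    transvection i j c * transvection j l 1 * transvection i j (-c) * transvection j l (-1) =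
      transvection i l c := by
  simp only [transvection, add_mul, mul_add, one_mul, mul_one, single_mul_single_same,
    single_mul_single_of_ne _ _ _ _ hij.symm, single_mul_single_of_ne _ _ _ _ hjl.symm,
    single_mul_single_of_ne _ _ _ _ hil.symm, zero_mul]
  simp only [mul_one, mul_neg, neg_neg, ← single_neg]
  abel

theorem diagonal_mulSingle (i : ι) (c : R) :
    diagonal (Pi.mulSingle i c) = transvection i i (c - 1) := by
  rw [transvection, ← diagonal_single, ← diagonal_one, diagonal_add]
  congr 1
  ext a
  obtain rfl | ha := eq_or_ne a i <;> simp [*]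

theorem permMatrix_mul_inv_add_single [Fintype ι] (σ : Equiv.Perm ι) (i : ι) (c : R) :
    σ.permMatrix R * (σ⁻¹.permMatrix R + single (σ i) i c) = transvection i i c := by
  have hsingle : σ.permMatrix R * single (σ i) i c = single i i c := by
    rw [Equiv.Perm.permMatrix, PEquiv.toMatrix_toPEquiv_mul]
    simpa using submatrix_single_equiv σ (Equiv.refl ι) (σ i) i c
  rw [mul_add, ← permMatrix_mul, inv_mul_cancel, permMatrix_one, hsingle, transvection]

theorem permMatrix_mul_mul_permMatrix_inv [Fintype ι] (σ : Equiv.Perm ι) (A : Matrix ι ι R) :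
    σ.permMatrix R * A * σ⁻¹.permMatrix R = A.submatrix σ σ := by
  rw [Equiv.Perm.permMatrix, Equiv.Perm.permMatrix, PEquiv.toMatrix_toPEquiv_mul,
    PEquiv.mul_toMatrix_toPEquiv]
  rfl

end ElementaryMatrices

/-- The multiplicative monoid of all products of Toeplitz matrices. -/
def toeplitzSubmonoid (n : ℕ) (R : Type*) [Semiring R] : Submonoid (Matrix (Fin n) (Fin n) R) :=
  Submonoid.closure {T | IsToeplitzMatrix T}

section ToeplitzSubmonoid

variable {n : ℕ} {R K : Type*} [CommRing R] [Field K]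

theorem IsToeplitzMatrix.mem_toeplitzSubmonoid {T : Matrix (Fin n) (Fin n) R}
    (hT : IsToeplitzMatrix T) : T ∈ toeplitzSubmonoid n R :=
  Submonoid.subset_closure hT

namespace toeplitzSubmonoid

theorem submatrix_addRight_mem {A : Matrix (Fin (n + 1)) (Fin (n + 1)) R}
    (hA : A ∈ toeplitzSubmonoid (n + 1) R) (k : Fin (n + 1)) :
    A.submatrix (Equiv.addRight k) (Equiv.addRight k) ∈ toeplitzSubmonoid (n + 1) R := by
  rw [← permMatrix_mul_mul_permMatrix_inv, Equiv.Perm.inv_def, Equiv.addRight_symm]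
  exact mul_mem (mul_mem (IsToeplitzMatrix.permMatrix_addRight k).mem_toeplitzSubmonoid hA)
    (IsToeplitzMatrix.permMatrix_addRight (-k)).mem_toeplitzSubmonoid

theorem transvection_sub_sub_mem {i j : Fin (n + 1)} {c : R}
    (h : transvection i j c ∈ toeplitzSubmonoid (n + 1) R) (k : Fin (n + 1)) :
    transvection (i - k) (j - k) c ∈ toeplitzSubmonoid (n + 1) R := by
  have hk := submatrix_addRight_mem h k
  rw [transvection_submatrix_equiv] at hk
  simpa [sub_eq_add_neg] using hk

theorem transvection_add_one_mem (i : Fin (n + 1)) (c : R) :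
    transvection i (i + 1) c ∈ toeplitzSubmonoid (n + 1) R := by
  have corner : transvection (Fin.last n) 0 c ∈ toeplitzSubmonoid (n + 1) R :=
    (IsToeplitzMatrix.one.add (.single_last_zero c)).mem_toeplitzSubmonoid
  have zero_sub_eq : 0 - (Fin.last n - i) = i + 1 := by
    rw [zero_sub, neg_sub, sub_eq_add_neg, Fin.neg_last]
  simpa only [sub_sub_cancel, zero_sub_eq] using transvection_sub_sub_mem corner (Fin.last n - i)

theorem transvection_self_mem (i : Fin (n + 1)) (c : R) :
    transvection i i c ∈ toeplitzSubmonoid (n + 1) R := by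
  have corner : transvection (Fin.last n) (Fin.last n) c ∈ toeplitzSubmonoid (n + 1) R := by
    rw [← permMatrix_mul_inv_add_single (Equiv.addRight 1), Equiv.Perm.inv_def, Equiv.addRight_symm]
    simp only [Equiv.coe_addRight, Fin.last_add_one]
    exact mul_mem (IsToeplitzMatrix.permMatrix_addRight 1).mem_toeplitzSubmonoid
      ((IsToeplitzMatrix.permMatrix_addRight (-1)).add (.single_zero_last c)).mem_toeplitzSubmonoid
  simpa only [sub_sub_cancel] using transvection_sub_sub_mem corner (Fin.last n - i)

theorem transvection_add_mem {d : Fin (n + 1)} (hd : d ≠ 0) (i : Fin (n + 1)) (c : R) :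
    transvection i (i + d) c ∈ toeplitzSubmonoid (n + 1) R := by
  induction d using Fin.induction generalizing c with
  | zero => exact absurd rfl hd
  | succ d ih =>
    have hne : d.castSucc ≠ d.castSucc + 1 := by
      rw [Fin.coeSucc_eq_succ]; exact Fin.castSucc_lt_succ.ne
    rw [← Fin.coeSucc_eq_succ] at hd ⊢
    obtain h0 | h0 := eq_or_ne d.castSucc 0
    · rw [h0, zero_add]
      exact transvection_add_one_mem i c
    · rw [← add_assoc, ← transvection_commutator (j := i + d.castSucc)
        (by rwa [Ne, left_eq_add]) (by rwa [add_assoc, Ne, add_right_inj])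
        (by rwa [add_assoc, Ne, left_eq_add])]
      exact mul_mem (mul_mem (mul_mem (ih h0 _) (transvection_add_one_mem _ _)) (ih h0 _))
        (transvection_add_one_mem _ _)

theorem diagonal_mem (d : Fin (n + 1) → R) : diagonal d ∈ toeplitzSubmonoid (n + 1) R := by
  suffices d ∈ (toeplitzSubmonoid (n + 1) R).comap (diagonalRingHom (Fin (n + 1)) R) from this
  rw [← Finset.univ_prod_mulSingle d]
  refine prod_mem fun i _ => ?_
  rw [Submonoid.mem_comap, diagonalRingHom_apply, diagonal_mulSingle]
  exact transvection_self_mem i _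

end toeplitzSubmonoid

theorem toeplitzSubmonoid_eq_top : toeplitzSubmonoid n K = ⊤ := by
  refine (Submonoid.eq_top_iff' _).2 fun M => ?_
  cases n with
  | zero => exact Subsingleton.elim 1 M ▸ one_mem _
  | succ n =>
    refine diagonal_transvection_induction (· ∈ toeplitzSubmonoid (n + 1) K) M
      (fun d _ => toeplitzSubmonoid.diagonal_mem d) (fun t => ?_) (fun _ _ => mul_mem)
    have h := toeplitzSubmonoid.transvection_add_mem (sub_ne_zero.2 t.hij.symm) t.i t.c
    rwa [add_sub_cancel] at h

theorem exists_list_length_eq_toeplitzNumber (M : Matrix (Fin n) (Fin n) K) :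
    ∃ L : List (Matrix (Fin n) (Fin n) K),
      L.length = toeplitzNumber M ∧ (∀ T ∈ L, IsToeplitzMatrix T) ∧ L.prod = M := by
  have hM : M ∈ toeplitzSubmonoid n K := by simp [toeplitzSubmonoid_eq_top]
  obtain ⟨L, hL, hprod⟩ := Submonoid.exists_list_of_mem_closure hM
  exact Nat.sInf_mem (s := {s | ∃ L : List (Matrix (Fin n) (Fin n) K),
    L.length = s ∧ (∀ T ∈ L, IsToeplitzMatrix T) ∧ L.prod = M}) ⟨_, L, rfl, hL, hprod⟩

theorem toeplitzNumber_mul_le (A B : Matrix (Fin n) (Fin n) K) :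
    toeplitzNumber (A * B) ≤ toeplitzNumber A + toeplitzNumber B := by
  obtain ⟨L, hL, hTL, rfl⟩ := exists_list_length_eq_toeplitzNumber A
  obtain ⟨L', hL', hTL', rfl⟩ := exists_list_length_eq_toeplitzNumber B
  refine Nat.sInf_le ⟨L ++ L', by rw [List.length_append, hL, hL'], ?_, List.prod_append⟩
  exact List.forall_mem_append.2 ⟨hTL, hTL'⟩

end ToeplitzSubmonoid

theorem IsToeplitzMatrix.toeplitzNumber_le_one {n : ℕ} {R : Type*} [Semiring R]
    {T : Matrix (Fin n) (Fin n) R} (hT : IsToeplitzMatrix T) : toeplitzNumber T ≤ 1 :=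
  Nat.sInf_le ⟨[T], rfl, List.forall_mem_singleton.2 hT, List.prod_singleton⟩

section LowerToeplitz

open PowerSeries

variable {n : ℕ} {R K : Type*} [CommSemiring R] [Field K]

/-- The lower triangular Toeplitz matrix with first column the coefficients of `f`: the matrix of
multiplication by `f` modulo `X ^ n` in the basis of monomials. -/
noncomputable def lowerToeplitz (n : ℕ) (f : R⟦X⟧) : Matrix (Fin n) (Fin n) R :=
  of fun i j => coeff i (X ^ (j : ℕ) * f)

theorem isToeplitzMatrix_lowerToeplitz (f : R⟦X⟧) : IsToeplitzMatrix (lowerToeplitz n f) :=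
  fun i j hi hj => by simp [lowerToeplitz, pow_succ', mul_assoc, coeff_succ_X_mul]

theorem lowerToeplitz_mulVec_coeff (f g : R⟦X⟧) :
    (lowerToeplitz n f *ᵥ fun j => coeff j g) = fun i : Fin n => coeff i (f * g) := by
  ext i
  calc ∑ j : Fin n, coeff i (X ^ (j : ℕ) * f) * coeff j g
      = ∑ j ∈ Finset.range n, coeff i (X ^ j * f) * coeff j g :=
        Fin.sum_univ_eq_sum_range (fun j => coeff i (X ^ j * f) * coeff j g) n
    _ = ∑ j ∈ Finset.range (i + 1), coeff i (X ^ j * f) * coeff j g := by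
        refine (Finset.sum_subset (by simp) fun j _ hj => ?_).symm
        rw [coeff_X_pow_mul', if_neg (by simpa using hj), zero_mul]
    _ = ∑ j ∈ Finset.range (i + 1), coeff j g * coeff (i - j) f := by
        refine Finset.sum_congr rfl fun j hj => ?_
        rw [coeff_X_pow_mul', if_pos (Finset.mem_range_succ_iff.1 hj), mul_comm]
    _ = coeff i (f * g) := by
        rw [mul_comm f, coeff_mul, Finset.Nat.sum_antidiagonal_eq_sum_range_succ_mk]

theorem lowerToeplitz_mul (f g : R⟦X⟧) :
    lowerToeplitz n (f * g) = lowerToeplitz n f * lowerToeplitz n g := by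
  ext i j
  have h := congr_fun (lowerToeplitz_mulVec_coeff f (X ^ (j : ℕ) * g)) i
  rw [mul_left_comm] at h
  exact h.symm

theorem lowerToeplitz_one : lowerToeplitz n (1 : R⟦X⟧) = 1 := by
  ext i j
  simp [lowerToeplitz, coeff_X_pow, one_apply, Fin.ext_iff]

theorem exists_col_lowerToeplitz_eq {v : Fin n → K} (hv : v ≠ 0) :
    ∃ (k : Fin n) (f : K⟦X⟧ˣ), (lowerToeplitz n (f : K⟦X⟧)).col k = v := by
  let g : K⟦X⟧ := .mk fun i => if h : i < n then v ⟨i, h⟩ else 0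
  have coeff_g (i : Fin n) : coeff i g = v i := by simp [g]
  have hg : g ≠ 0 := fun h => hv <| funext fun i => by rw [← coeff_g, h, map_zero]; rfl
  have order_lt : g.order.toNat < n := by
    by_contra h
    exact coeff_order hg (by simp [g, h])
  obtain ⟨f, hf⟩ := isUnit_divided_by_X_pow_order hg
  refine ⟨⟨g.order.toNat, order_lt⟩, f, funext fun i => ?_⟩
  rw [col_apply, lowerToeplitz, of_apply, hf, X_pow_order_mul_divXPowOrder, coeff_g]

end LowerToeplitz

section Kernels

open LinearMap Submodule

variable {n : ℕ} {R K : Type*} [CommRing R] [Field K]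

theorem permMatrix_submatrix_castSucc_mulVec (σ : Equiv.Perm (Fin (n + 1))) (u : Fin n → R) :
    (σ.permMatrix R).submatrix Fin.castSucc Fin.castSucc *ᵥ u =
      fun i => (Fin.snoc u 0 : Fin (n + 1) → R) (σ i.castSucc) := by
  ext i
  have h := congr_fun (permMatrix_mulVec (R := R) (σ := σ) (v := Fin.snoc u 0)) i.castSucc
  rw [Function.comp_apply] at h
  rw [← h, mulVec, mulVec, dotProduct, dotProduct, Fin.sum_univ_castSucc]
  simp

theorem ker_permMatrix_submatrix_castSucc {σ : Equiv.Perm (Fin (n + 1))} {k : Fin n}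
    (hσ : σ (Fin.last n) = k.castSucc) :
    ker ((σ.permMatrix R).submatrix Fin.castSucc Fin.castSucc).mulVecLin =
      span R {Pi.single k 1} := by
  ext u
  rw [LinearMap.mem_ker, mulVecLin_apply, permMatrix_submatrix_castSucc_mulVec, mem_span_singleton]
  constructor
  · intro h
    refine ⟨u k, funext fun j => ?_⟩
    obtain rfl | hj := eq_or_ne j k
    · simp
    · obtain ⟨i, hi⟩ : ∃ i, σ (Fin.castSucc i) = j.castSucc := by
        have hne : σ.symm j.castSucc ≠ Fin.last n := by
          rwa [Ne, Equiv.symm_apply_eq, hσ, Fin.castSucc_inj]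
        exact ⟨(σ.symm j.castSucc).castPred hne, by simp⟩
      simpa [hi, hj] using (congr_fun h i).symm
  · rintro ⟨c, rfl⟩
    ext i
    have hne : σ i.castSucc ≠ k.castSucc := hσ ▸ σ.injective.ne (Fin.castSucc_ne_last i)
    induction h : σ i.castSucc using Fin.lastCases with
    | last => simp
    | cast j =>
      have hjk : j ≠ k := by rwa [h, Ne, Fin.castSucc_inj] at hne
      simp [hjk]

theorem ker_mulVecLin_mul_eq_span {ι κ : Type*} [Fintype ι] [DecidableEq ι] {A : Matrix κ ι R}
    {B C : Matrix ι ι R} {w : ι → R} (hA : ker A.mulVecLin = span R {w}) (hBC : B * C = 1) :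
    ker (A * B).mulVecLin = span R {C *ᵥ w} := by
  have hCB : C * B = 1 := mul_eq_one_comm.1 hBC
  ext u
  rw [mulVecLin_mul, ker_comp, hA, mem_comap, mulVecLin_apply, mem_span_singleton,
    mem_span_singleton]
  refine exists_congr fun c => ⟨fun h => ?_, fun h => ?_⟩
  · rw [← mulVec_smul, h, mulVec_mulVec, hCB, one_mulVec]
  · rw [← h, mulVec_smul, mulVec_mulVec, hBC, one_mulVec]

theorem exists_isToeplitzMatrix_ker_mul_eq_span (v : Fin n → K) :
    ∃ T₁ T₂ : Matrix (Fin n) (Fin n) K, IsToeplitzMatrix T₁ ∧ IsToeplitzMatrix T₂ ∧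
      ker (T₁ * T₂).mulVecLin = span K {v} := by
  obtain rfl | hv := eq_or_ne v 0
  · exact ⟨1, 1, .one, .one, by simp⟩
  obtain ⟨k, f, rfl⟩ := exists_col_lowerToeplitz_eq hv
  refine ⟨((Equiv.addRight (k.castSucc + 1)).permMatrix K).submatrix Fin.castSucc Fin.castSucc,
    lowerToeplitz n ↑f⁻¹, (IsToeplitzMatrix.permMatrix_addRight _).submatrix_castSucc,
    isToeplitzMatrix_lowerToeplitz _, ?_⟩
  have hσ : Equiv.addRight (k.castSucc + 1) (Fin.last n) = k.castSucc := by
    change Fin.last n + (k.castSucc + 1) = k.castSucc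
    rw [add_left_comm, Fin.last_add_one, add_zero]
  rw [← mulVec_single_one]
  refine ker_mulVecLin_mul_eq_span (ker_permMatrix_submatrix_castSucc hσ) ?_
  rw [← lowerToeplitz_mul, Units.inv_mul, lowerToeplitz_one]

theorem exists_linearEquiv_comp_eq_of_ker_eq {D V W : Type*} [DivisionRing D] [AddCommGroup V]
    [Module D V] [AddCommGroup W] [Module D W] {f g : V →ₗ[D] W} [FiniteDimensional D (range g)]
    (h : ker f = ker g) : ∃ e : W ≃ₗ[D] W, f = e ∘ₗ g := by
  obtain ⟨e, he⟩ := exists_linearEquiv_restrict_eq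
    (g.quotKerEquivRange.symm ≪≫ₗ quotEquivOfEq _ _ h.symm ≪≫ₗ f.quotKerEquivRange)
  refine ⟨e, LinearMap.ext fun x => ?_⟩
  have hx := he ⟨g x, mem_range_self g x⟩
  rwa [LinearEquiv.trans_apply, LinearEquiv.trans_apply, quotKerEquivRange_symm_apply_image,
    mkQ_apply, quotEquivOfEq_mk, quotKerEquivRange_apply_mk] at hx

theorem exists_isUnit_eq_mul_of_ker_mulVecLin_eq {ι κ : Type*} [Fintype ι] [DecidableEq ι]
    [Fintype κ] {A B : Matrix ι κ K} (h : ker A.mulVecLin = ker B.mulVecLin) :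
    ∃ P : Matrix ι ι K, IsUnit P ∧ A = P * B := by
  obtain ⟨e, he⟩ := exists_linearEquiv_comp_eq_of_ker_eq h
  classical
  refine ⟨LinearMap.toMatrix' e, isUnit_toMatrix'_iff.2 ?_, toLin'.injective ?_⟩
  · exact (Module.End.isUnit_iff _).2 e.bijective
  · rwa [toLin'_mul, toLin'_toMatrix', toLin'_apply', toLin'_apply']

theorem exists_ker_mulVecLin_eq_span_singleton {ι κ : Type*} [Fintype κ]
    {M : Matrix ι κ K} (hM : Fintype.card κ ≤ M.rank + 1) :
    ∃ v, ker M.mulVecLin = span K {v} := by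
  have hrank := M.mulVecLin.finrank_range_add_finrank_ker
  rw [← Matrix.rank, Module.finrank_fintype_fun_eq_card] at hrank
  exact (finrank_le_one_iff_isPrincipal _).1 (by omega) |>.principal

theorem exists_isUnit_eq_mul_toeplitz_mul_toeplitz {M : Matrix (Fin n) (Fin n) K}
    (hM : n ≤ M.rank + 1) :
    ∃ P T₁ T₂ : Matrix (Fin n) (Fin n) K,
      IsUnit P ∧ IsToeplitzMatrix T₁ ∧ IsToeplitzMatrix T₂ ∧ M = P * (T₁ * T₂) := by
  obtain ⟨v, hv⟩ := exists_ker_mulVecLin_eq_span_singleton (M := M) (by simpa using hM)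
  obtain ⟨T₁, T₂, hT₁, hT₂, hker⟩ := exists_isToeplitzMatrix_ker_mul_eq_span v
  obtain ⟨P, hP, hMP⟩ := exists_isUnit_eq_mul_of_ker_mulVecLin_eq (hv.trans hker.symm)
  exact ⟨P, T₁, T₂, hP, hT₁, hT₂, hMP⟩

end Kernels

theorem rank_n_sub_one_toepnum_bound_general {K : Type*} [Field K] {n b : ℕ}
    (hb : ∀ P : Matrix (Fin n) (Fin n) K, IsUnit P → toeplitzNumber P ≤ b)
    (M : Matrix (Fin n) (Fin n) K) (hM : n ≤ M.rank + 1) :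
    toeplitzNumber M ≤ b + 2 := by
  obtain ⟨P, T₁, T₂, hP, hT₁, hT₂, rfl⟩ := exists_isUnit_eq_mul_toeplitz_mul_toeplitz hM
  calc toeplitzNumber (P * (T₁ * T₂))
      ≤ toeplitzNumber P + (toeplitzNumber T₁ + toeplitzNumber T₂) :=
        (toeplitzNumber_mul_le _ _).trans (Nat.add_le_add_left (toeplitzNumber_mul_le _ _) _)
    _ ≤ b + (1 + 1) := by
        gcongr
        exacts [hb P hP, hT₁.toeplitzNumber_le_one, hT₂.toeplitzNumber_le_one]

theorem rank_n_sub_one_toepnum_bound {n : ℕ}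
    (yeLim : ∀ P : Matrix (Fin n) (Fin n) ℂ, IsUnit P → ToepNum P ≤ 2 * (n / 2) + 2)
    (M : Matrix (Fin n) (Fin n) ℂ) (hM : M.rank = n - 1) :
    ToepNum M ≤ 2 * (n / 2) + 4 :=
  rank_n_sub_one_toepnum_bound_general yeLim M (by omega)
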